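/- arXiv:2006.16580 — 2 statements merged into one kernel-verified Lean document; each statement's English description precedes it below -/
import Mathlib

section
/- Let M be a symmetric n×n integer matrix all of whose diagonal entries equal 2. If M is congruent over ℤ to C_{A_n} (that is, M = Pᵀ C_{A_n} P for some P ∈ GL(n,ℤ)), then M is represented by the root system A_n: there exists an n×(n+1) integer matrix K, each of whose rows is of the form ±(e_i − e_j) for some 1 ≤ i < j ≤ n+1, such that M = K Kᵀ. -/
open Matrix

/-- The Cartan matrix of the Dynkin diagram `Aₙ`. -/
def CartanA (n : ℕ) : Matrix (Fin n) (Fin n) ℤ :=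
  Matrix.of fun i j =>
    if i = j then 2
    else if (i : ℤ) - (j : ℤ) = 1 ∨ (j : ℤ) - (i : ℤ) = 1 then -1
    else 0

/-- A vector of the root system `Aₙ`: `±(eᵢ - eⱼ)` for some `i < j`. -/
def IsRootAn {n : ℕ} (v : Fin (n + 1) → ℤ) : Prop :=
  ∃ a b : Fin (n + 1), a < b ∧
    (v = Pi.single a 1 - Pi.single b 1 ∨ v = -(Pi.single a 1 - Pi.single b 1))

/-!
Let `S` be the matrix whose rows are the simple roots `eᵢ - eᵢ₊₁`; its Gram matrix `S Sᵀ` is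
`C_{Aₙ}`, so `Pᵀ C_{Aₙ} P = K Kᵀ` with `K = Pᵀ S`. The rows of `K` are integer combinations of
simple roots, so their coordinates sum to zero, and their squared norms are the diagonal entries
of `K Kᵀ`, all equal to `2`. An integer vector `v` with these two properties is a root: it has a
coordinate `vₐ ≥ 1` and a coordinate `v_b ≤ -1`, and then
`‖v - (eₐ - e_b)‖² = 4 - 2 (vₐ - v_b) ≤ 0`.
-/

section DotProduct

variable {ι : Type*} [Fintype ι]

theorem sub_dotProduct_sub_self {R : Type*} [CommRing R] (v w : ι → R) :
    (v - w) ⬝ᵥ (v - w) = v ⬝ᵥ v + w ⬝ᵥ w - 2 * (w ⬝ᵥ v) := by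
  rw [sub_dotProduct, dotProduct_sub, dotProduct_sub, dotProduct_comm v w]
  ring

variable [DecidableEq ι]

theorem single_sub_single_dotProduct {R : Type*} [NonAssocRing R] (a b : ι) (v : ι → R) :
    (Pi.single a 1 - Pi.single b 1) ⬝ᵥ v = v a - v b := by
  simp only [sub_dotProduct, single_one_dotProduct]

theorem eq_single_sub_single_of_dotProduct_self_le_two {v : ι → ℤ} {a b : ι}
    (ha : 0 < v a) (hb : v b < 0) (hnorm : v ⬝ᵥ v ≤ 2) :
    v = Pi.single a 1 - Pi.single b 1 := by
  let r : ι → ℤ := Pi.single a 1 - Pi.single b 1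
  have hab : a ≠ b := ne_of_apply_ne v (hb.trans ha).ne'
  have hrv : r ⬝ᵥ v = v a - v b := single_sub_single_dotProduct a b v
  have hrr : r ⬝ᵥ r = 2 :=
    (single_sub_single_dotProduct a b r).trans (by simp [r, hab, hab.symm])
  have hdist : (v - r) ⬝ᵥ (v - r) ≤ 0 := by
    rw [sub_dotProduct_sub_self, hrv, hrr]
    omega
  have hnonneg : 0 ≤ (v - r) ⬝ᵥ (v - r) := Finset.sum_nonneg fun i _ => mul_self_nonneg _
  exact sub_eq_zero.mp (dotProduct_self_eq_zero.mp (hdist.antisymm hnonneg))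

theorem exists_eq_single_sub_single_of_sum_eq_zero {v : ι → ℤ}
    (hne : v ≠ 0) (hsum : ∑ i, v i = 0) (hnorm : v ⬝ᵥ v ≤ 2) :
    ∃ a b, a ≠ b ∧ v = Pi.single a 1 - Pi.single b 1 := by
  obtain ⟨i, hi⟩ := Function.ne_iff.mp hne
  obtain ⟨a, -, ha⟩ := Finset.exists_pos_of_sum_zero_of_exists_nonzero v hsum
    ⟨i, Finset.mem_univ i, hi⟩
  obtain ⟨b, -, hb⟩ := Finset.exists_pos_of_sum_zero_of_exists_nonzero (fun j => -v j)
    (by rw [Finset.sum_neg_distrib, hsum, neg_zero]) ⟨i, Finset.mem_univ i, neg_ne_zero.mpr hi⟩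
  have hb : v b < 0 := neg_pos.mp hb
  exact ⟨a, b, ne_of_apply_ne v (hb.trans ha).ne',
    eq_single_sub_single_of_dotProduct_self_le_two ha hb hnorm⟩

end DotProduct

theorem isRootAn_single_sub_single {n : ℕ} {a b : Fin (n + 1)} (hab : a ≠ b) :
    IsRootAn (Pi.single a 1 - Pi.single b 1) := by
  rcases hab.lt_or_gt with h | h
  · exact ⟨a, b, h, Or.inl rfl⟩
  · exact ⟨b, a, h, Or.inr (neg_sub _ _).symm⟩

theorem isRootAn_of_sum_eq_zero_of_dotProduct_self_eq_two {n : ℕ} {v : Fin (n + 1) → ℤ}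
    (hsum : ∑ i, v i = 0) (hnorm : v ⬝ᵥ v = 2) : IsRootAn v := by
  have hne : v ≠ 0 := by
    rintro rfl
    simp at hnorm
  obtain ⟨a, b, hab, rfl⟩ := exists_eq_single_sub_single_of_sum_eq_zero hne hsum hnorm.le
  exact isRootAn_single_sub_single hab

/-- The matrix whose rows are the simple roots `eᵢ - eᵢ₊₁` of the root system `Aₙ`; it factors
`C_{Aₙ}` as a Gram matrix. The indices `i` and `i + 1` in `Fin (n + 1)` are `i.castSucc` and
`i.succ`. -/
def simpleRootsA (n : ℕ) : Matrix (Fin n) (Fin (n + 1)) ℤ :=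
  Matrix.of fun i => Pi.single i.castSucc 1 - Pi.single i.succ 1

theorem simpleRootsA_mulVec_apply {n : ℕ} (v : Fin (n + 1) → ℤ) (i : Fin n) :
    (simpleRootsA n *ᵥ v) i = v i.castSucc - v i.succ :=
  single_sub_single_dotProduct _ _ v

theorem simpleRootsA_mulVec_one (n : ℕ) : simpleRootsA n *ᵥ 1 = 0 := by
  ext i
  simp [simpleRootsA_mulVec_apply]

theorem simpleRootsA_mul_transpose (n : ℕ) :
    simpleRootsA n * (simpleRootsA n)ᵀ = CartanA n := by
  ext i j
  have hentry : (simpleRootsA n * (simpleRootsA n)ᵀ) i j =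
      simpleRootsA n j i.castSucc - simpleRootsA n j i.succ :=
    simpleRootsA_mulVec_apply (simpleRootsA n j) i
  rw [hentry]
  simp only [simpleRootsA, CartanA, of_apply, Pi.sub_apply, Pi.single_apply, Fin.ext_iff,
    Fin.val_castSucc, Fin.val_succ]
  split_ifs <;> omega

theorem sum_row_mul_simpleRootsA {m : Type*} {n : ℕ} (Q : Matrix m (Fin n) ℤ) (i : m) :
    ∑ j, (Q * simpleRootsA n) i j = 0 := by
  have hsum : (Q * simpleRootsA n) *ᵥ 1 = 0 := by
    rw [← mulVec_mulVec, simpleRootsA_mulVec_one, mulVec_zero]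
  exact (dotProduct_one _).symm.trans (congrFun hsum i)

theorem mul_cartanA_mul_transpose {m : Type*} {n : ℕ} (Q : Matrix m (Fin n) ℤ) :
    Q * CartanA n * Qᵀ = (Q * simpleRootsA n) * (Q * simpleRootsA n)ᵀ := by
  simp only [← simpleRootsA_mul_transpose, transpose_mul, Matrix.mul_assoc]

theorem represented_by_rootSystem_of_congruent_cartanA_general
    {m : Type*} {n : ℕ} {M : Matrix m m ℤ} (hdiag : ∀ i, M i i = 2)
    (P : Matrix (Fin n) m ℤ) (hM : M = Pᵀ * CartanA n * P) :
    ∃ K : Matrix m (Fin (n + 1)) ℤ, (∀ i, IsRootAn (K i)) ∧ M = K * Kᵀ := by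
  have hgram : M = (Pᵀ * simpleRootsA n) * (Pᵀ * simpleRootsA n)ᵀ :=
    hM.trans (mul_cartanA_mul_transpose Pᵀ)
  refine ⟨Pᵀ * simpleRootsA n, fun i => ?_, hgram⟩
  have hnorm : (Pᵀ * simpleRootsA n) i ⬝ᵥ (Pᵀ * simpleRootsA n) i = 2 :=
    (congrFun₂ hgram i i).symm.trans (hdiag i)
  exact isRootAn_of_sum_eq_zero_of_dotProduct_self_eq_two (sum_row_mul_simpleRootsA Pᵀ i) hnorm

/-- A symmetric integer matrix with `2`'s on the diagonal that is congruent
over `ℤ` to `C_{Aₙ}` is represented by the root system `Aₙ`. -/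
theorem represented_by_rootSystem_of_congruent_cartanA
    (n : ℕ) (M : Matrix (Fin n) (Fin n) ℤ)
    (hsymm : Mᵀ = M) (hdiag : ∀ i, M i i = 2)
    (hcong : ∃ P : Matrix (Fin n) (Fin n) ℤ, IsUnit P.det ∧
      M = Pᵀ * CartanA n * P) :
    ∃ K : Matrix (Fin n) (Fin (n + 1)) ℤ,
      (∀ i : Fin n, IsRootAn (K i)) ∧ M = K * Kᵀ := by
  obtain ⟨P, -, hM⟩ := hcong
  exact represented_by_rootSystem_of_congruent_cartanA_general hdiag P hM
end

section
/- Let G be a finite, connected simple graph on the vertex set Fin n and let A be a symmetric n×n integer matrix with A_{ij} ∈ {1, −1} whenever i and j are adjacent in G and A_{ij} = 0 otherwise (so (G, A) is a signed graph with underlying graph G). If the matrix M = 2I + A is congruent over ℤ to C_{A_n} (that is, M = Pᵀ C_{A_n} P for some P ∈ GL(n,ℤ)), then G is isomorphic to the line graph of a tree: there exists a finite simple graph T that is connected and acyclic such that G is isomorphic to the line graph L(T). -/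
open Matrix

/-!
`C_{Aₙ}` is the Gram matrix of the vectors `e_j - e_{j+1}`, that is, of the columns of the oriented
incidence matrix `B` of the path on `n + 1` vertices. So `2I + A` is the Gram matrix of the columns
of `W = B P`. These are integer vectors with coordinate sum `0` and squared norm `2`, hence of the
form `e_a - e_b`: `W` is again an oriented incidence matrix, of a graph `T` on the same `n + 1`
vertices. As `P` is nonsingular, the only functions with equal values at the ends of every edge of
`T` are the constants, so `T` is connected. Having at most `n` edges, it is a tree with exactly one
edge for each column. Finally, `e_a - e_b` and `e_c - e_d` are orthogonal exactly when the edges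
`ab` and `cd` are disjoint, so the nonzero off-diagonal entries of `A` describe `L(T)`.
-/

section RootVec

variable {V : Type*} [DecidableEq V]

/-- The root `e_a - e_b` of the root lattice of type `A` with coordinates indexed by `V`.
For `a = b` it is `0`, which is not a root. -/
def rootVec (a b : V) : V → ℤ := Pi.single a 1 - Pi.single b 1

variable [Fintype V]

theorem dotProduct_rootVec (f : V → ℤ) (a b : V) : f ⬝ᵥ rootVec a b = f a - f b := by
  simp [rootVec, dotProduct_sub]

theorem rootVec_dotProduct_self {a b : V} (hab : a ≠ b) : rootVec a b ⬝ᵥ rootVec a b = 2 := by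
  rw [dotProduct_rootVec]
  simp [rootVec, hab, hab.symm]

theorem rootVec_dotProduct_ne_zero_iff {a b c d : V} (hab : a ≠ b) (hcd : c ≠ d) :
    rootVec a b ⬝ᵥ rootVec c d ≠ 0 ↔ ∃ v, v ∈ s(a, b) ∧ v ∈ s(c, d) := by
  have hmeet : (∃ v, v ∈ s(a, b) ∧ v ∈ s(c, d)) ↔ (a = c ∨ a = d) ∨ b = c ∨ b = d := by
    simp only [Sym2.mem_iff, or_and_right, exists_or, exists_eq_left]
  rw [hmeet, dotProduct_rootVec]
  simp only [rootVec, Pi.sub_apply, Pi.single_apply]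
  grind

theorem exists_eq_rootVec {w : V → ℤ} (hsum : ∑ k, w k = 0) (hsq : w ⬝ᵥ w = 2) :
    ∃ a b, a ≠ b ∧ w = rootVec a b := by
  obtain ⟨k, hk⟩ : ∃ k, w k ≠ 0 := by
    by_contra! h
    simp [dotProduct, h] at hsq
  obtain ⟨a, -, ha⟩ := Finset.exists_pos_of_sum_zero_of_exists_nonzero w hsum
    ⟨k, Finset.mem_univ k, hk⟩
  obtain ⟨b, -, hb⟩ := Finset.exists_pos_of_sum_zero_of_exists_nonzero (-w)
    (by simp [hsum]) ⟨k, Finset.mem_univ k, by simpa using hk⟩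
  rw [Pi.neg_apply] at hb
  have hab : a ≠ b := by
    rintro rfl
    omega
  -- `w a - w b ≥ 2`, so expanding the square shows that `w - rootVec a b` has norm `0`.
  have hle : (w - rootVec a b) ⬝ᵥ (w - rootVec a b) ≤ 0 := by
    rw [sub_dotProduct, dotProduct_sub, dotProduct_sub, dotProduct_comm (rootVec a b) w,
      rootVec_dotProduct_self hab, dotProduct_rootVec, hsq]
    omega
  have hnonneg : 0 ≤ (w - rootVec a b) ⬝ᵥ (w - rootVec a b) :=
    Finset.sum_nonneg fun _ _ => mul_self_nonneg _
  exact ⟨a, b, hab, sub_eq_zero.mp (dotProduct_self_eq_zero.mp (hle.antisymm hnonneg))⟩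

end RootVec

section OrientedIncMatrix

variable {V ι : Type*} [DecidableEq V]

/-- The oriented incidence matrix of the directed multigraph with vertex set `V` and one edge from
`b i` to `a i` for every `i : ι`; a loop contributes a zero column. -/
def orientedIncMatrix (a b : ι → V) : Matrix V ι ℤ :=
  Matrix.of fun v i => rootVec (a i) (b i) v

variable [Fintype V]

theorem vecMul_orientedIncMatrix (f : V → ℤ) (a b : ι → V) :
    f ᵥ* orientedIncMatrix a b = fun i => f (a i) - f (b i) :=
  funext fun i => dotProduct_rootVec f (a i) (b i)

theorem one_vecMul_orientedIncMatrix (a b : ι → V) : 1 ᵥ* orientedIncMatrix a b = 0 := by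
  ext i
  simp [vecMul_orientedIncMatrix]

theorem transpose_mul_orientedIncMatrix_apply (a b : ι → V) (i j : ι) :
    ((orientedIncMatrix a b)ᵀ * orientedIncMatrix a b) i j =
      rootVec (a i) (b i) ⬝ᵥ rootVec (a j) (b j) :=
  rfl

theorem exists_eq_orientedIncMatrix {W : Matrix V ι ℤ} (hsum : 1 ᵥ* W = 0)
    (hsq : ∀ i, (Wᵀ * W) i i = 2) :
    ∃ a b : ι → V, (∀ i, a i ≠ b i) ∧ W = orientedIncMatrix a b := by
  have hcol (i : ι) : ∃ a b, a ≠ b ∧ W.col i = rootVec a b := by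
    refine exists_eq_rootVec ?_ (hsq i)
    simpa [Matrix.vecMul, dotProduct] using congrFun hsum i
  choose a b hab hW using hcol
  exact ⟨a, b, hab, Matrix.ext fun v i => congrFun (hW i) v⟩

/-- The oriented incidence matrix of the path on `n + 1` vertices, with edge `j` joining `j` and
`j + 1`; its columns are the simple roots of type `Aₙ`. -/
def pathIncMatrix (n : ℕ) : Matrix (Fin (n + 1)) (Fin n) ℤ :=
  orientedIncMatrix Fin.castSucc Fin.succ

theorem transpose_mul_pathIncMatrix (n : ℕ) : (pathIncMatrix n)ᵀ * pathIncMatrix n = CartanA n := by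
  ext i j
  rw [pathIncMatrix, transpose_mul_orientedIncMatrix_apply, dotProduct_rootVec]
  simp only [rootVec, Pi.sub_apply, Pi.single_apply, CartanA, Matrix.of_apply, Fin.ext_iff,
    Fin.val_castSucc, Fin.val_succ]
  split_ifs <;> omega

theorem eq_of_vecMul_pathIncMatrix_eq_zero {n : ℕ} {f : Fin (n + 1) → ℤ}
    (hf : f ᵥ* pathIncMatrix n = 0) (u v : Fin (n + 1)) : f u = f v := by
  rw [pathIncMatrix, vecMul_orientedIncMatrix] at hf
  have hzero (k : Fin (n + 1)) : f k = f 0 := by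
    induction k using Fin.induction with
    | zero => rfl
    | succ j ih => exact (sub_eq_zero.mp (congrFun hf j)).symm.trans ih
  rw [hzero u, hzero v]

end OrientedIncMatrix

section Tree

variable {V : Type*} {T : SimpleGraph V}

theorem preconnected_of_forall_adj_imp_eq {R : Type*} [Nontrivial R]
    (h : ∀ f : V → R, (∀ u v, T.Adj u v → f u = f v) → ∀ u v, f u = f v) : T.Preconnected := by
  classical
  intro u v
  obtain ⟨x, y, hxy⟩ := exists_pair_ne R
  let f : V → R := fun w => if T.Reachable u w then x else y
  have hf (w w' : V) (hadj : T.Adj w w') : f w = f w' := by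
    have hiff : T.Reachable u w ↔ T.Reachable u w' :=
      ⟨fun h => h.trans hadj.reachable, fun h => h.trans hadj.symm.reachable⟩
    simp only [f, hiff]
  by_contra huv
  exact hxy (by simpa [f, huv] using h f hf u v)

theorem isTree_and_bijective_of_surjective_edgeSet [Finite V] {ι : Type*} [Finite ι]
    (hT : T.Connected) (hcard : Nat.card V = Nat.card ι + 1) {e : ι → T.edgeSet}
    (he : Function.Surjective e) : T.IsTree ∧ Function.Bijective e := by
  have hge : Nat.card ι ≤ Nat.card T.edgeSet := by
    have := hT.card_vert_le_card_edgeSet_add_one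
    omega
  have heq : Nat.card ι = Nat.card T.edgeSet := hge.antisymm (Nat.card_le_card_of_surjective e he)
  refine ⟨SimpleGraph.isTree_iff_connected_and_card.mpr ⟨hT, ?_⟩,
    (Nat.bijective_iff_surjective_and_card e).mpr ⟨he, heq⟩⟩
  rw [← heq, hcard]

end Tree

section EdgeGraph

variable {V ι : Type*} {a b : ι → V}

/-- The simple graph underlying the multigraph with vertex set `V` and one edge joining `a i` and
`b i` for every `i : ι`: parallel edges are merged and loops removed. -/
def edgeGraph (a b : ι → V) : SimpleGraph V :=
  SimpleGraph.fromEdgeSet (Set.range fun i => s(a i, b i))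

theorem edgeGraph_adj (hab : ∀ i, a i ≠ b i) (i : ι) : (edgeGraph a b).Adj (a i) (b i) :=
  (SimpleGraph.fromEdgeSet_adj _).mpr ⟨⟨i, rfl⟩, hab i⟩

/-- The edge of `edgeGraph a b` joining `a i` and `b i`, as an element of the edge set, which is the
vertex type of the line graph. -/
def edgeGraph.edge (hab : ∀ i, a i ≠ b i) (i : ι) : (edgeGraph a b).edgeSet :=
  ⟨s(a i, b i), edgeGraph_adj hab i⟩

theorem edgeGraph.edge_surjective (hab : ∀ i, a i ≠ b i) :
    Function.Surjective (edgeGraph.edge hab) := by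
  rintro ⟨x, hx⟩
  obtain ⟨⟨i, hi⟩, -⟩ := (SimpleGraph.edgeSet_fromEdgeSet (Set.range fun i => s(a i, b i))).le hx
  exact ⟨i, Subtype.ext hi⟩

variable [Fintype V] [DecidableEq V]

theorem edgeGraph_preconnected (hab : ∀ i, a i ≠ b i)
    (hker : ∀ f : V → ℤ, f ᵥ* orientedIncMatrix a b = 0 → ∀ u v, f u = f v) :
    (edgeGraph a b).Preconnected := by
  refine preconnected_of_forall_adj_imp_eq fun f hf => hker f ?_
  rw [vecMul_orientedIncMatrix]
  exact funext fun i => sub_eq_zero.mpr (hf _ _ (edgeGraph_adj hab i))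

theorem edgeGraph.lineGraph_adj_edge_iff (hab : ∀ i, a i ≠ b i)
    (hinj : Function.Injective (edgeGraph.edge hab)) (i j : ι) :
    (edgeGraph a b).lineGraph.Adj (edgeGraph.edge hab i) (edgeGraph.edge hab j) ↔
      i ≠ j ∧ ((orientedIncMatrix a b)ᵀ * orientedIncMatrix a b) i j ≠ 0 := by
  rw [SimpleGraph.lineGraph_adj_iff_exists, hinj.ne_iff, transpose_mul_orientedIncMatrix_apply,
    rootVec_dotProduct_ne_zero_iff (hab i) (hab j)]
  rfl

end EdgeGraph

theorem exists_isTree_iso_lineGraph_of_gram {V ι : Type*} [Fintype V] [Finite ι]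
    (hcard : Nat.card V = Nat.card ι + 1) {G : SimpleGraph ι} {W : Matrix V ι ℤ}
    (hsum : 1 ᵥ* W = 0) (hker : ∀ f : V → ℤ, f ᵥ* W = 0 → ∀ u v, f u = f v)
    (hsq : ∀ i, (Wᵀ * W) i i = 2) (hG : ∀ i j, G.Adj i j ↔ i ≠ j ∧ (Wᵀ * W) i j ≠ 0) :
    ∃ T : SimpleGraph V, T.IsTree ∧ Nonempty (G ≃g T.lineGraph) := by
  classical
  have : Nonempty V := (Nat.card_pos_iff.mp (hcard ▸ Nat.succ_pos _)).1
  obtain ⟨a, b, hab, rfl⟩ := exists_eq_orientedIncMatrix hsum hsq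
  obtain ⟨hT, he⟩ := isTree_and_bijective_of_surjective_edgeSet
    ⟨edgeGraph_preconnected hab hker⟩ hcard (edgeGraph.edge_surjective hab)
  refine ⟨edgeGraph a b, hT, ⟨⟨Equiv.ofBijective _ he, fun {i j} => ?_⟩⟩⟩
  rw [hG]
  exact edgeGraph.lineGraph_adj_edge_iff hab he.injective i j

theorem underlying_lineGraph_of_tree_of_congruent_cartanA_general {n : ℕ}
    (G : SimpleGraph (Fin n)) (A P : Matrix (Fin n) (Fin n) ℤ)
    (hadj : ∀ i j, G.Adj i j ↔ A i j ≠ 0) (hP : P.det ≠ 0)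
    (hM : 2 • (1 : Matrix (Fin n) (Fin n) ℤ) + A = Pᵀ * CartanA n * P) :
    ∃ T : SimpleGraph (Fin (n + 1)), T.IsTree ∧ Nonempty (G ≃g T.lineGraph) := by
  have hgram : (pathIncMatrix n * P)ᵀ * (pathIncMatrix n * P) = 2 • 1 + A := by
    rw [hM, ← transpose_mul_pathIncMatrix, Matrix.transpose_mul]
    simp only [Matrix.mul_assoc]
  have hentry (i j : Fin n) :
      ((pathIncMatrix n * P)ᵀ * (pathIncMatrix n * P)) i j = (if i = j then 2 else 0) + A i j := by
    rw [hgram, Matrix.add_apply, Matrix.smul_apply, Matrix.one_apply, smul_ite]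
    simp
  have hdiag (i : Fin n) : A i i = 0 := not_not.mp ((hadj i i).not.mp G.irrefl)
  refine exists_isTree_iso_lineGraph_of_gram (W := pathIncMatrix n * P) (by simp)
    ?sum_eq_zero ?kernel ?norm_sq ?adj
  case sum_eq_zero =>
    rw [← Matrix.vecMul_vecMul, pathIncMatrix, one_vecMul_orientedIncMatrix, Matrix.zero_vecMul]
  case kernel =>
    intro f hf
    rw [← Matrix.vecMul_vecMul] at hf
    exact eq_of_vecMul_pathIncMatrix_eq_zero (Matrix.eq_zero_of_vecMul_eq_zero hP hf)
  case norm_sq =>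
    intro i
    simp only [hentry, hdiag, if_true, add_zero]
  case adj =>
    intro i j
    rw [hentry, hadj]
    obtain rfl | hij := eq_or_ne i j
    · simp only [hdiag, ne_eq, not_true_eq_false, false_and]
    · simp only [hij, if_false, zero_add, ne_eq, not_false_eq_true, true_and]

/-- Lemma 3.1: if `(G, A)` is a connected signed graph whose matrix `2I + A`
is congruent over `ℤ` to `C_{Aₙ}`, then the underlying graph `G` is
isomorphic to the line graph of a tree. -/
theorem underlying_lineGraph_of_tree_of_congruent_cartanA
    (n : ℕ) (G : SimpleGraph (Fin n)) (hconn : G.Connected)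
    (A : Matrix (Fin n) (Fin n) ℤ)
    (hsymm : Aᵀ = A)
    (hadj : ∀ i j, G.Adj i j → A i j = 1 ∨ A i j = -1)
    (hnadj : ∀ i j, ¬ G.Adj i j → A i j = 0)
    (hcong : ∃ P : Matrix (Fin n) (Fin n) ℤ, IsUnit P.det ∧
      2 • (1 : Matrix (Fin n) (Fin n) ℤ) + A = Pᵀ * CartanA n * P) :
    ∃ (m : ℕ) (T : SimpleGraph (Fin m)),
      T.Connected ∧ T.IsAcyclic ∧ Nonempty (G ≃g T.lineGraph) := by
  obtain ⟨P, hP, hM⟩ := hcong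
  have hadj_iff (i j : Fin n) : G.Adj i j ↔ A i j ≠ 0 := by grind
  obtain ⟨T, hT, hG⟩ :=
    underlying_lineGraph_of_tree_of_congruent_cartanA_general G A P hadj_iff hP.ne_zero hM
  exact ⟨n + 1, T, hT.connected, hT.isAcyclic, hG⟩
end
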